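/- Let A be a 7×n real matrix with all entries nonnegative whose (classical) rank equals 3. Then the nonnegative rank of A is at most 6; that is, there exist a 7×6 matrix B and a 6×n matrix C, both with all entries nonnegative, such that A = B·C. -/

import Mathlib

/-- Determinant of three vectors in `ℝ³`. -/
def D3 (x y z : Fin 3 → ℝ) : ℝ :=
  x 0 * (y 1 * z 2 - y 2 * z 1) - x 1 * (y 0 * z 2 - y 2 * z 0) + x 2 * (y 0 * z 1 - y 1 * z 0)

/-- Rows are nonnegative combinations of six nonnegative vectors. -/
def NR6 {n : ℕ} (a : Fin 7 → Fin n → ℝ) : Prop :=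
  ∃ C : Fin 6 → Fin n → ℝ, (∀ k j, 0 ≤ C k j) ∧
    ∀ i, ∃ b : Fin 6 → ℝ, (∀ k, 0 ≤ b k) ∧ ∀ j, a i j = ∑ k, b k * C k j

lemma NR6_perm {n : ℕ} (a : Fin 7 → Fin n → ℝ) (σ : Equiv.Perm (Fin 7))
    (h : NR6 (fun i => a (σ i))) : NR6 a := by
  obtain ⟨C, hC, h⟩ := h
  refine ⟨C, hC, fun i => ?_⟩
  simpa using h (σ.symm i)

lemma cramer4 {n : ℕ} (W : Fin 3 → Fin n → ℝ) (x y z w : Fin 3 → ℝ) (j : Fin n) :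
    D3 y z w * (∑ k, x k * W k j) - D3 x z w * (∑ k, y k * W k j)
      + D3 x y w * (∑ k, z k * W k j) - D3 x y z * (∑ k, w k * W k j) = 0 := by
  simp only [D3, Fin.sum_univ_three]; ring

/-- Strict convex position in cyclic order. -/
def Pos7 (u : Fin 7 → Fin 3 → ℝ) : Prop :=
  ∀ i j k, i < j → j < k → 0 < D3 (u i) (u j) (u k)

lemma D3_rot (x y z : Fin 3 → ℝ) : D3 x y z = D3 z x y := by
  simp only [D3]; ring

lemma Pos7_succ (u : Fin 7 → Fin 3 → ℝ) (h : Pos7 u) : Pos7 (fun i => u (i + 1)) := by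
  intro i j k hij hjk
  by_cases hk : k = 6
  · subst hk
    show 0 < D3 (u (i + 1)) (u (j + 1)) (u (6 + 1))
    rw [D3_rot]
    have e : (6 + 1 : Fin 7) = 0 := by decide
    rw [e]
    exact h _ _ _ (by revert i j; decide) (by revert i j; decide)
  · exact h _ _ _ (by revert i j k; decide) (by revert i j k; decide)

lemma Pos7_add (u : Fin 7 → Fin 3 → ℝ) (h : Pos7 u) (s : Fin 7) :
    Pos7 (fun i => u (i + s)) := by
  induction s using Fin.induction with
  | zero => simpa using h
  | succ s ih =>
    intro i j k hij hjk
    have := Pos7_succ _ ih i j k hij hjk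
    have e : ∀ q : Fin 7, q + 1 + s.castSucc = q + s.succ := by
      intro q
      rw [add_assoc, add_comm 1, Fin.coeSucc_eq_succ]
    simpa only [e] using this

/-- Failure condition, right version. -/
def Rt (u : Fin 7 → Fin 3 → ℝ) (s : Fin 7) : Prop :=
  D3 (u (0+s)) (u (1+s)) (u (2+s)) * D3 (u (3+s)) (u (5+s)) (u (6+s))
    < D3 (u (1+s)) (u (2+s)) (u (3+s)) * D3 (u (0+s)) (u (5+s)) (u (6+s))

/-- Failure condition, left version. -/
def Lt (u : Fin 7 → Fin 3 → ℝ) (s : Fin 7) : Prop :=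
  D3 (u (1+s)) (u (2+s)) (u (4+s)) * D3 (u (0+s)) (u (5+s)) (u (6+s))
    < D3 (u (0+s)) (u (1+s)) (u (2+s)) * D3 (u (4+s)) (u (5+s)) (u (6+s))

lemma Rt_Lt0 (p : Fin 7 → Fin 3 → ℝ) (h : Pos7 p)
    (hR : D3 (p 0) (p 1) (p 2) * D3 (p 3) (p 5) (p 6)
      < D3 (p 1) (p 2) (p 3) * D3 (p 0) (p 5) (p 6))
    (hL : D3 (p 0) (p 4) (p 5) * D3 (p 1) (p 2) (p 3)
      < D3 (p 3) (p 4) (p 5) * D3 (p 0) (p 1) (p 2)) : False := by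
  have id1 : D3 (p 3) (p 5) (p 6) * D3 (p 0) (p 4) (p 5)
      = D3 (p 0) (p 5) (p 6) * D3 (p 3) (p 4) (p 5)
        + D3 (p 4) (p 5) (p 6) * D3 (p 0) (p 3) (p 5) := by simp only [D3]; ring
  have h012 := h 0 1 2 (by decide) (by decide)
  have h123 := h 1 2 3 (by decide) (by decide)
  have h356 := h 3 5 6 (by decide) (by decide)
  have h056 := h 0 5 6 (by decide) (by decide)
  have h045 := h 0 4 5 (by decide) (by decide)
  have h345 := h 3 4 5 (by decide) (by decide)
  have h456 := h 4 5 6 (by decide) (by decide)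
  have h035 := h 0 3 5 (by decide) (by decide)
  have e1 := mul_pos h456 h035
  have e2 := mul_lt_mul'' hR hL (by positivity) (by positivity)
  have e3 : 0 < D3 (p 0) (p 1) (p 2) * D3 (p 1) (p 2) (p 3) := by positivity
  have e4 : 0 < (D3 (p 0) (p 1) (p 2) * D3 (p 1) (p 2) (p 3)) *
    (D3 (p 3) (p 5) (p 6) * D3 (p 0) (p 4) (p 5)
      - D3 (p 0) (p 5) (p 6) * D3 (p 3) (p 4) (p 5)) := mul_pos e3 (by linarith)
  nlinarith

lemma Rt_all0 (p : Fin 7 → Fin 3 → ℝ) (h : Pos7 p)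
    (h0 : D3 (p 0) (p 1) (p 2) * D3 (p 3) (p 5) (p 6)
      < D3 (p 1) (p 2) (p 3) * D3 (p 0) (p 5) (p 6))
    (h1 : D3 (p 1) (p 2) (p 3) * D3 (p 0) (p 4) (p 6)
      < D3 (p 2) (p 3) (p 4) * D3 (p 0) (p 1) (p 6))
    (h2 : D3 (p 2) (p 3) (p 4) * D3 (p 0) (p 1) (p 5)
      < D3 (p 3) (p 4) (p 5) * D3 (p 0) (p 1) (p 2)) : False := by
  have id1 : D3 (p 3) (p 5) (p 6) * D3 (p 0) (p 4) (p 5)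
      = D3 (p 0) (p 5) (p 6) * D3 (p 3) (p 4) (p 5)
        + D3 (p 4) (p 5) (p 6) * D3 (p 0) (p 3) (p 5) := by simp only [D3]; ring
  have id2 : D3 (p 0) (p 4) (p 6) * D3 (p 0) (p 1) (p 5)
      = D3 (p 0) (p 1) (p 4) * D3 (p 0) (p 5) (p 6)
        + D3 (p 0) (p 1) (p 6) * D3 (p 0) (p 4) (p 5) := by simp only [D3]; ring
  have h012 := h 0 1 2 (by decide) (by decide)
  have h123 := h 1 2 3 (by decide) (by decide)
  have h234 := h 2 3 4 (by decide) (by decide)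
  have h356 := h 3 5 6 (by decide) (by decide)
  have h056 := h 0 5 6 (by decide) (by decide)
  have h045 := h 0 4 5 (by decide) (by decide)
  have h345 := h 3 4 5 (by decide) (by decide)
  have h456 := h 4 5 6 (by decide) (by decide)
  have h035 := h 0 3 5 (by decide) (by decide)
  have h046 := h 0 4 6 (by decide) (by decide)
  have h015 := h 0 1 5 (by decide) (by decide)
  have h014 := h 0 1 4 (by decide) (by decide)
  have h016 := h 0 1 6 (by decide) (by decide)
  generalize D3 (p 0) (p 1) (p 2) = a012 at *
  generalize D3 (p 1) (p 2) (p 3) = a123 at *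
  generalize D3 (p 2) (p 3) (p 4) = a234 at *
  generalize D3 (p 3) (p 5) (p 6) = a356 at *
  generalize D3 (p 0) (p 5) (p 6) = a056 at *
  generalize D3 (p 0) (p 4) (p 5) = a045 at *
  generalize D3 (p 3) (p 4) (p 5) = a345 at *
  generalize D3 (p 4) (p 5) (p 6) = a456 at *
  generalize D3 (p 0) (p 3) (p 5) = a035 at *
  generalize D3 (p 0) (p 4) (p 6) = a046 at *
  generalize D3 (p 0) (p 1) (p 5) = a015 at *
  generalize D3 (p 0) (p 1) (p 4) = a014 at *
  generalize D3 (p 0) (p 1) (p 6) = a016 at *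
  have e1 : a056 * a345 < a356 * a045 := by nlinarith [mul_pos h456 h035]
  have e2 : a016 * a045 < a046 * a015 := by nlinarith [mul_pos h014 h056]
  have p1 := mul_lt_mul'' (mul_lt_mul'' h0 h1 (by positivity) (by positivity)) h2
    (by positivity) (by positivity)
  have p2 := mul_lt_mul'' e1 e2 (by positivity) (by positivity)
  have hK : 0 < a012 * a123 * a234 := by positivity
  have p1' : (a012 * a123 * a234) * (a356 * a046 * a015)
      < (a012 * a123 * a234) * (a056 * a016 * a345) := by linarith
  have p1'' := lt_of_mul_lt_mul_left p1' hK.le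
  have p2' : a045 * (a056 * a016 * a345) < a045 * (a356 * a046 * a015) := by linarith
  have p2'' := lt_of_mul_lt_mul_left p2' h045.le
  linarith

lemma Lt_all0 (p : Fin 7 → Fin 3 → ℝ) (h : Pos7 p)
    (h0 : D3 (p 1) (p 2) (p 4) * D3 (p 0) (p 5) (p 6)
      < D3 (p 0) (p 1) (p 2) * D3 (p 4) (p 5) (p 6))
    (h1 : D3 (p 0) (p 1) (p 3) * D3 (p 4) (p 5) (p 6)
      < D3 (p 0) (p 1) (p 6) * D3 (p 3) (p 4) (p 5))
    (h2 : D3 (p 0) (p 2) (p 6) * D3 (p 3) (p 4) (p 5)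
      < D3 (p 0) (p 5) (p 6) * D3 (p 2) (p 3) (p 4)) : False := by
  have id1 : D3 (p 1) (p 2) (p 4) * D3 (p 0) (p 2) (p 3)
      = D3 (p 0) (p 1) (p 2) * D3 (p 2) (p 3) (p 4)
        + D3 (p 1) (p 2) (p 3) * D3 (p 0) (p 2) (p 4) := by simp only [D3]; ring
  have id2 : D3 (p 0) (p 1) (p 3) * D3 (p 0) (p 2) (p 6)
      = D3 (p 0) (p 3) (p 6) * D3 (p 0) (p 1) (p 2)
        + D3 (p 0) (p 1) (p 6) * D3 (p 0) (p 2) (p 3) := by simp only [D3]; ring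
  have h012 := h 0 1 2 (by decide) (by decide)
  have h123 := h 1 2 3 (by decide) (by decide)
  have h234 := h 2 3 4 (by decide) (by decide)
  have h124 := h 1 2 4 (by decide) (by decide)
  have h056 := h 0 5 6 (by decide) (by decide)
  have h023 := h 0 2 3 (by decide) (by decide)
  have h345 := h 3 4 5 (by decide) (by decide)
  have h456 := h 4 5 6 (by decide) (by decide)
  have h024 := h 0 2 4 (by decide) (by decide)
  have h013 := h 0 1 3 (by decide) (by decide)
  have h026 := h 0 2 6 (by decide) (by decide)
  have h036 := h 0 3 6 (by decide) (by decide)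
  have h016 := h 0 1 6 (by decide) (by decide)
  generalize D3 (p 0) (p 1) (p 2) = a012 at *
  generalize D3 (p 1) (p 2) (p 3) = a123 at *
  generalize D3 (p 2) (p 3) (p 4) = a234 at *
  generalize D3 (p 1) (p 2) (p 4) = a124 at *
  generalize D3 (p 0) (p 5) (p 6) = a056 at *
  generalize D3 (p 0) (p 2) (p 3) = a023 at *
  generalize D3 (p 3) (p 4) (p 5) = a345 at *
  generalize D3 (p 4) (p 5) (p 6) = a456 at *
  generalize D3 (p 0) (p 2) (p 4) = a024 at *
  generalize D3 (p 0) (p 1) (p 3) = a013 at *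
  generalize D3 (p 0) (p 2) (p 6) = a026 at *
  generalize D3 (p 0) (p 3) (p 6) = a036 at *
  generalize D3 (p 0) (p 1) (p 6) = a016 at *
  have e1 : a012 * a234 < a124 * a023 := by nlinarith [mul_pos h123 h024]
  have e2 : a016 * a023 < a013 * a026 := by nlinarith [mul_pos h036 h012]
  have p1 := mul_lt_mul'' (mul_lt_mul'' h0 h1 (by positivity) (by positivity)) h2
    (by positivity) (by positivity)
  have p2 := mul_lt_mul'' e1 e2 (by positivity) (by positivity)
  have hK : 0 < a056 * a456 * a345 := by positivity
  have p1' : (a056 * a456 * a345) * (a124 * a013 * a026)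
      < (a056 * a456 * a345) * (a012 * a016 * a234) := by linarith
  have p1'' := lt_of_mul_lt_mul_left p1' hK.le
  have p2' : a023 * (a012 * a016 * a234) < a023 * (a124 * a013 * a026) := by linarith
  have p2'' := lt_of_mul_lt_mul_left p2' h023.le
  linarith

lemma Rt_Lt (u : Fin 7 → Fin 3 → ℝ) (h : Pos7 u) (s : Fin 7) (hR : Rt u s)
    (hL : Lt u (s + 3)) : False := by
  refine Rt_Lt0 _ (Pos7_add u h s) hR ?_
  simp only [Lt] at hL
  have e0 : ∀ s : Fin 7, (0 + (s + 3) : Fin 7) = 3 + s := by decide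
  have e1 : ∀ s : Fin 7, (1 + (s + 3) : Fin 7) = 4 + s := by decide
  have e2 : ∀ s : Fin 7, (2 + (s + 3) : Fin 7) = 5 + s := by decide
  have e4 : ∀ s : Fin 7, (4 + (s + 3) : Fin 7) = 0 + s := by decide
  have e5 : ∀ s : Fin 7, (5 + (s + 3) : Fin 7) = 1 + s := by decide
  have e6 : ∀ s : Fin 7, (6 + (s + 3) : Fin 7) = 2 + s := by decide
  rw [e0, e1, e2, e4, e5, e6] at hL
  rw [D3_rot (u (4+s)) (u (5+s)) (u (0+s)),
    ← D3_rot (u (1+s)) (u (2+s)) (u (3+s))] at hL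
  exact hL

lemma mod7_cover : ∀ s t : Fin 7, t = s ∨ t = s + 3 ∨ t = s + 3 + 3 ∨ t = s + 3 + 3 + 3 ∨
    t = s + 3 + 3 + 3 + 3 ∨ t = s + 3 + 3 + 3 + 3 + 3 ∨ t = s + 3 + 3 + 3 + 3 + 3 + 3 := by
  decide

lemma exists_good (u : Fin 7 → Fin 3 → ℝ) (h : Pos7 u) : ∃ s, ¬ Rt u s ∧ ¬ Lt u s := by
  by_contra hc
  push Not at hc
  have hstep : ∀ s, Rt u s → Rt u (s + 3) := by
    intro s hs
    by_contra hn
    exact Rt_Lt u h s hs (hc _ hn)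
  by_cases hR : ∃ s, Rt u s
  · have all : ∀ t, Rt u t := by
      obtain ⟨s, hs⟩ := hR
      have h1 := hstep _ hs
      have h2 := hstep _ h1
      have h3 := hstep _ h2
      have h4 := hstep _ h3
      have h5 := hstep _ h4
      have h6 := hstep _ h5
      intro t
      have := mod7_cover s t
      rcases this with e | e | e | e | e | e | e
      · rw [e]; exact hs
      · rw [e]; exact h1
      · rw [e]; exact h2
      · rw [e]; exact h3
      · rw [e]; exact h4
      · rw [e]; exact h5
      · rw [e]; exact h6
    have a0 := all 0
    have a1 := all 1
    have a2 := all 2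
    refine Rt_all0 u h a0 ?_ ?_
    · have : D3 (u 1) (u 2) (u 3) * D3 (u 4) (u 6) (u 0)
        < D3 (u 2) (u 3) (u 4) * D3 (u 1) (u 6) (u 0) := by simpa [Rt] using a1
      rwa [D3_rot (u 4), D3_rot (u 1) (u 6)] at this
    · have : D3 (u 2) (u 3) (u 4) * D3 (u 5) (u 0) (u 1)
        < D3 (u 3) (u 4) (u 5) * D3 (u 2) (u 0) (u 1) := a2
      rwa [← D3_rot (u 0) (u 1) (u 5), ← D3_rot (u 0) (u 1) (u 2)] at this
  · push Not at hR
    have a0 := hc 0 (hR 0)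
    have a6 := hc 6 (hR 6)
    have a5 := hc 5 (hR 5)
    refine Lt_all0 u h a0 ?_ ?_
    · have : D3 (u 0) (u 1) (u 3) * D3 (u 6) (u 4) (u 5)
        < D3 (u 6) (u 0) (u 1) * D3 (u 3) (u 4) (u 5) := a6
      rwa [← D3_rot (u 4) (u 5) (u 6), ← D3_rot (u 0) (u 1) (u 6)] at this
    · have : D3 (u 6) (u 0) (u 2) * D3 (u 5) (u 3) (u 4)
        < D3 (u 5) (u 6) (u 0) * D3 (u 2) (u 3) (u 4) := a5
      rwa [← D3_rot (u 0) (u 2) (u 6), ← D3_rot (u 3) (u 4) (u 5), D3_rot (u 5) (u 6)] at this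

/-- A vector inside a quadrilateral cone is nonnegative when the vertices are. -/
lemma quad_nonneg {n : ℕ} (W : Fin 3 → Fin n → ℝ) (a b c d F : Fin 3 → ℝ) (j : Fin n)
    (ha : 0 ≤ ∑ k, a k * W k j) (hb : 0 ≤ ∑ k, b k * W k j)
    (hc : 0 ≤ ∑ k, c k * W k j) (hd : 0 ≤ ∑ k, d k * W k j)
    (habc : 0 < D3 a b c) (hacd : 0 < D3 a c d)
    (h1 : 0 ≤ D3 a b F) (h2 : 0 ≤ D3 b c F) (h3 : 0 ≤ D3 c d F) (h4 : 0 ≤ D3 d a F) :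
    0 ≤ ∑ k, F k * W k j := by
  rcases le_total (D3 a c F) 0 with h | h
  · have e := cramer4 W a b c F j
    have : 0 ≤ D3 a b c * ∑ k, F k * W k j := by
      nlinarith [mul_nonneg h2 ha, mul_nonneg (neg_nonneg.2 h) hb, mul_nonneg h1 hc]
    exact nonneg_of_mul_nonneg_right this habc
  · have e := cramer4 W a c d F j
    have e' : D3 d a F = - D3 a d F := by simp only [D3]; ring
    have : 0 ≤ D3 a c d * ∑ k, F k * W k j := by
      nlinarith [mul_nonneg h3 ha, mul_nonneg h4 hc, mul_nonneg h hd]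
    exact nonneg_of_mul_nonneg_right this hacd

lemma cramerv (x y z w : Fin 3 → ℝ) (k : Fin 3) :
    D3 y z w * x k - D3 x z w * y k + D3 x y w * z k - D3 x y z * w k = 0 := by
  fin_cases k <;> simp [D3] <;> ring

set_option maxHeartbeats 2000000 in
lemma good_NR6 {n : ℕ} (W : Fin 3 → Fin n → ℝ) (p : Fin 7 → Fin 3 → ℝ) (h : Pos7 p)
    (a : Fin 7 → Fin n → ℝ) (ha : ∀ i j, a i j = ∑ k, p i k * W k j)
    (hpos : ∀ i j, 0 ≤ a i j)
    (hR : ¬ Rt p 0) (hL : ¬ Lt p 0) : NR6 a := by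
  have hR' : D3 (p 1) (p 2) (p 3) * D3 (p 0) (p 5) (p 6)
    ≤ D3 (p 0) (p 1) (p 2) * D3 (p 3) (p 5) (p 6) := not_lt.1 hR
  have hL' : D3 (p 0) (p 1) (p 2) * D3 (p 4) (p 5) (p 6)
    ≤ D3 (p 1) (p 2) (p 4) * D3 (p 0) (p 5) (p 6) := not_lt.1 hL
  clear hR hL
  have h012 := h 0 1 2 (by decide) (by decide)
  have h123 := h 1 2 3 (by decide) (by decide)
  have h456 := h 4 5 6 (by decide) (by decide)
  have h023 := h 0 2 3 (by decide) (by decide)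
  have h013 := h 0 1 3 (by decide) (by decide)
  have h056 := h 0 5 6 (by decide) (by decide)
  have h046 := h 0 4 6 (by decide) (by decide)
  have h045 := h 0 4 5 (by decide) (by decide)
  obtain ⟨l0, hl0⟩ : ∃ x, x = D3 (p 1) (p 2) (p 3) * D3 (p 4) (p 5) (p 6) := ⟨_, rfl⟩
  obtain ⟨l1, hl1⟩ : ∃ x, x = D3 (p 0) (p 2) (p 3) * D3 (p 4) (p 5) (p 6) := ⟨_, rfl⟩
  obtain ⟨l2, hl2⟩ : ∃ x, x = D3 (p 0) (p 1) (p 3) * D3 (p 4) (p 5) (p 6) := ⟨_, rfl⟩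
  obtain ⟨l3, hl3⟩ : ∃ x, x = D3 (p 0) (p 1) (p 2) * D3 (p 4) (p 5) (p 6) := ⟨_, rfl⟩
  obtain ⟨l4, hl4⟩ : ∃ x, x = D3 (p 0) (p 5) (p 6) * D3 (p 1) (p 2) (p 3) := ⟨_, rfl⟩
  obtain ⟨l5, hl5⟩ : ∃ x, x = D3 (p 0) (p 4) (p 6) * D3 (p 1) (p 2) (p 3) := ⟨_, rfl⟩
  obtain ⟨l6, hl6⟩ : ∃ x, x = D3 (p 0) (p 4) (p 5) * D3 (p 1) (p 2) (p 3) := ⟨_, rfl⟩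
  have pl0 : 0 < l0 := hl0 ▸ mul_pos h123 h456
  have pl1 : 0 < l1 := hl1 ▸ mul_pos h023 h456
  have pl2 : 0 < l2 := hl2 ▸ mul_pos h013 h456
  have pl3 : 0 < l3 := hl3 ▸ mul_pos h012 h456
  have pl4 : 0 < l4 := hl4 ▸ mul_pos h056 h123
  have pl5 : 0 < l5 := hl5 ▸ mul_pos h046 h123
  have pl6 : 0 < l6 := hl6 ▸ mul_pos h045 h123
  -- the two vector relations
  have r1 : ∀ k, l0 * p 0 k - l1 * p 1 k + l2 * p 2 k - l3 * p 3 k = 0 := by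
    intro k
    rw [hl0, hl1, hl2, hl3]
    linear_combination D3 (p 4) (p 5) (p 6) * cramerv (p 0) (p 1) (p 2) (p 3) k
  have r2 : ∀ k, l4 * p 4 k - l5 * p 5 k + l6 * p 6 k - l0 * p 0 k = 0 := by
    intro k
    rw [hl0, hl4, hl5, hl6]
    linear_combination - D3 (p 1) (p 2) (p 3) * cramerv (p 0) (p 4) (p 5) (p 6) k
  have R1 : ∀ j, l0 * a 0 j - l1 * a 1 j + l2 * a 2 j - l3 * a 3 j = 0 := by
    intro j
    simp only [ha, Fin.sum_univ_three]
    linear_combination W 0 j * r1 0 + W 1 j * r1 1 + W 2 j * r1 2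
  have R2 : ∀ j, l4 * a 4 j - l5 * a 5 j + l6 * a 6 j - l0 * a 0 j = 0 := by
    intro j
    simp only [ha, Fin.sum_univ_three]
    linear_combination W 0 j * r2 0 + W 1 j * r2 1 + W 2 j * r2 2
  have hF : ∀ j, 0 ≤ l3 * a 3 j + l6 * a 6 j - l0 * a 0 j := by
    intro j
    have := quad_nonneg W (p 2) (p 3) (p 5) (p 6)
      (fun k => l3 * p 3 k + l6 * p 6 k - l0 * p 0 k) j
      (ha 2 j ▸ hpos 2 j) (ha 3 j ▸ hpos 3 j) (ha 5 j ▸ hpos 5 j) (ha 6 j ▸ hpos 6 j)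
      (h 2 3 5 (by decide) (by decide)) (h 2 5 6 (by decide) (by decide)) ?_ ?_ ?_ ?_
    · refine this.trans_eq ?_
      simp only [ha, Fin.sum_univ_three]; ring
    · have i1 : D3 (p 0) (p 3) (p 5) * (D3 (p 0) (p 4) (p 5) * D3 (p 2) (p 3) (p 6)
          - D3 (p 4) (p 5) (p 6) * D3 (p 0) (p 2) (p 3))
          = D3 (p 0) (p 4) (p 5) * D3 (p 0) (p 3) (p 6) * D3 (p 2) (p 3) (p 5)
          + D3 (p 0) (p 5) (p 6) * D3 (p 3) (p 4) (p 5) * D3 (p 0) (p 2) (p 3) := by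
        simp only [D3]; ring
      have h035 := h 0 3 5 (by decide) (by decide)
      have h036 := h 0 3 6 (by decide) (by decide)
      have h235 := h 2 3 5 (by decide) (by decide)
      have h345 := h 3 4 5 (by decide) (by decide)
      have i2 : 0 ≤ D3 (p 0) (p 4) (p 5) * D3 (p 2) (p 3) (p 6)
          - D3 (p 4) (p 5) (p 6) * D3 (p 0) (p 2) (p 3) :=
        nonneg_of_mul_nonneg_right (i1 ▸ by positivity) h035
      have i3 : D3 (p 2) (p 3) (fun k => l3 * p 3 k + l6 * p 6 k - l0 * p 0 k)
          = l6 * D3 (p 2) (p 3) (p 6) - l0 * D3 (p 0) (p 2) (p 3) := by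
        simp only [D3]; ring
      rw [i3, hl6, hl0]
      nlinarith [mul_nonneg h123.le i2]
    · have i3 : D3 (p 3) (p 5) (fun k => l3 * p 3 k + l6 * p 6 k - l0 * p 0 k)
          = l4 * D3 (p 3) (p 4) (p 5) := by
        have : (fun k => l3 * p 3 k + l6 * p 6 k - l0 * p 0 k)
          = fun k => l3 * p 3 k + l5 * p 5 k - l4 * p 4 k := by
          funext k; linarith [r2 k]
        rw [this]; simp only [D3]; ring
      rw [i3]; exact (mul_pos pl4 (h 3 4 5 (by decide) (by decide))).le
    · have i3 : D3 (p 5) (p 6) (fun k => l3 * p 3 k + l6 * p 6 k - l0 * p 0 k)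
          = l3 * D3 (p 3) (p 5) (p 6) - l0 * D3 (p 0) (p 5) (p 6) := by
        simp only [D3]; ring
      rw [i3, hl3, hl0]
      nlinarith [mul_nonneg h456.le (sub_nonneg.2 hR')]
    · have i3 : D3 (p 6) (p 2) (fun k => l3 * p 3 k + l6 * p 6 k - l0 * p 0 k)
          = l1 * D3 (p 1) (p 2) (p 6) := by
        have : (fun k => l3 * p 3 k + l6 * p 6 k - l0 * p 0 k)
          = fun k => l2 * p 2 k + l6 * p 6 k - l1 * p 1 k := by
          funext k; linarith [r1 k]
        rw [this]; simp only [D3]; ring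
      rw [i3]; exact (mul_pos pl1 (h 1 2 6 (by decide) (by decide))).le
  have hG : ∀ j, 0 ≤ l1 * a 1 j + l4 * a 4 j - l0 * a 0 j := by
    intro j
    have := quad_nonneg W (p 1) (p 2) (p 4) (p 5)
      (fun k => l1 * p 1 k + l4 * p 4 k - l0 * p 0 k) j
      (ha 1 j ▸ hpos 1 j) (ha 2 j ▸ hpos 2 j) (ha 4 j ▸ hpos 4 j) (ha 5 j ▸ hpos 5 j)
      (h 1 2 4 (by decide) (by decide)) (h 1 4 5 (by decide) (by decide)) ?_ ?_ ?_ ?_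
    · refine this.trans_eq ?_
      simp only [ha, Fin.sum_univ_three]; ring
    · have i3 : D3 (p 1) (p 2) (fun k => l1 * p 1 k + l4 * p 4 k - l0 * p 0 k)
          = l4 * D3 (p 1) (p 2) (p 4) - l0 * D3 (p 0) (p 1) (p 2) := by
        simp only [D3]; ring
      rw [i3, hl4, hl0]
      nlinarith [mul_nonneg h123.le (sub_nonneg.2 hL')]
    · have i3 : D3 (p 2) (p 4) (fun k => l1 * p 1 k + l4 * p 4 k - l0 * p 0 k)
          = l3 * D3 (p 2) (p 3) (p 4) := by
        have : (fun k => l1 * p 1 k + l4 * p 4 k - l0 * p 0 k)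
          = fun k => l2 * p 2 k + l4 * p 4 k - l3 * p 3 k := by
          funext k; linarith [r1 k]
        rw [this]; simp only [D3]; ring
      rw [i3]; exact (mul_pos pl3 (h 2 3 4 (by decide) (by decide))).le
    · have i1 : D3 (p 0) (p 2) (p 4) * (D3 (p 0) (p 2) (p 3) * D3 (p 1) (p 4) (p 5)
          - D3 (p 1) (p 2) (p 3) * D3 (p 0) (p 4) (p 5))
          = D3 (p 0) (p 2) (p 3) * D3 (p 0) (p 1) (p 4) * D3 (p 2) (p 4) (p 5)
          + D3 (p 0) (p 1) (p 2) * D3 (p 2) (p 3) (p 4) * D3 (p 0) (p 4) (p 5) := by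
        simp only [D3]; ring
      have h024 := h 0 2 4 (by decide) (by decide)
      have h014 := h 0 1 4 (by decide) (by decide)
      have h245 := h 2 4 5 (by decide) (by decide)
      have h234 := h 2 3 4 (by decide) (by decide)
      have i2 : 0 ≤ D3 (p 0) (p 2) (p 3) * D3 (p 1) (p 4) (p 5)
          - D3 (p 1) (p 2) (p 3) * D3 (p 0) (p 4) (p 5) :=
        nonneg_of_mul_nonneg_right (i1 ▸ by positivity) h024
      have i3 : D3 (p 4) (p 5) (fun k => l1 * p 1 k + l4 * p 4 k - l0 * p 0 k)
          = l1 * D3 (p 1) (p 4) (p 5) - l0 * D3 (p 0) (p 4) (p 5) := by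
        simp only [D3]; ring
      rw [i3, hl1, hl0]
      nlinarith [mul_nonneg h456.le i2]
    · have i3 : D3 (p 5) (p 1) (fun k => l1 * p 1 k + l4 * p 4 k - l0 * p 0 k)
          = l6 * D3 (p 1) (p 5) (p 6) := by
        have : (fun k => l1 * p 1 k + l4 * p 4 k - l0 * p 0 k)
          = fun k => l1 * p 1 k + l5 * p 5 k - l6 * p 6 k := by
          funext k; linarith [r2 k]
        rw [this]; simp only [D3]; ring
      rw [i3]; exact (mul_pos pl6 (h 1 5 6 (by decide) (by decide))).le
  clear r1 r2 hR' hL' hl0 hl1 hl2 hl3 hl4 hl5 hl6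
  -- assemble the factorization
  obtain ⟨t, ht0, ht1, ht2, htm⟩ : ∃ t : Fin n → ℝ, (∀ j, 0 ≤ t j) ∧
      (∀ j, 0 ≤ l2 * a 2 j - l1 * a 1 j + t j) ∧ (∀ j, 0 ≤ l4 * a 4 j - l0 * a 0 j + t j) ∧
      (∀ j, t j = 0 ∨ t j = - (l2 * a 2 j - l1 * a 1 j) ∨
        t j = - (l4 * a 4 j - l0 * a 0 j)) := by
    refine ⟨fun j => max 0 (max (- (l2 * a 2 j - l1 * a 1 j)) (- (l4 * a 4 j - l0 * a 0 j))),
      fun j => le_max_left _ _, fun j => ?_, fun j => ?_, fun j => ?_⟩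
    · have := le_trans (le_max_left (- (l2 * a 2 j - l1 * a 1 j)) (- (l4 * a 4 j - l0 * a 0 j)))
        (le_max_right 0 _)
      linarith
    · have := le_trans (le_max_right (- (l2 * a 2 j - l1 * a 1 j)) (- (l4 * a 4 j - l0 * a 0 j)))
        (le_max_right 0 _)
      linarith
    · simp only []
      rcases max_choice 0 (max (- (l2 * a 2 j - l1 * a 1 j)) (- (l4 * a 4 j - l0 * a 0 j)))
        with h | h
      · left; exact h
      · right
        rw [h]
        exact max_choice _ _
  have nn : ∀ i j (l : ℝ), 0 < l → 0 ≤ l * a i j := fun i j l hl => mul_nonneg hl.le (hpos i j)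
  refine ⟨![fun j => l2 * a 2 j - l1 * a 1 j + t j, fun j => l4 * a 4 j - l0 * a 0 j + t j, t,
    fun j => l1 * a 1 j - t j, fun j => l0 * a 0 j - t j, fun j => l6 * a 6 j - t j], ?_, ?_⟩
  · intro k j
    have n0 := nn 0 j _ pl0
    have n1 := nn 1 j _ pl1
    have n2 := nn 2 j _ pl2
    have n3 := nn 3 j _ pl3
    have n4 := nn 4 j _ pl4
    have n5 := nn 5 j _ pl5
    have n6 := nn 6 j _ pl6
    have q1 := R1 j
    have q2 := R2 j
    have f := hF j
    have g := hG j
    have m := htm j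
    fin_cases k
    · exact ht1 j
    · exact ht2 j
    · exact ht0 j
    · show 0 ≤ l1 * a 1 j - t j
      rcases m with m | m | m <;> rw [m] <;> linarith
    · show 0 ≤ l0 * a 0 j - t j
      rcases m with m | m | m <;> rw [m] <;> linarith
    · show 0 ≤ l6 * a 6 j - t j
      rcases m with m | m | m <;> rw [m] <;> linarith
  · have fin : ∀ (i : Fin 7) (l : ℝ) (b : Fin 6 → ℝ), 0 < l → (∀ k, 0 ≤ b k) →
        (∀ j, l * a i j = b 0 * (l2 * a 2 j - l1 * a 1 j + t j)
          + b 1 * (l4 * a 4 j - l0 * a 0 j + t j) + b 2 * t j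
          + b 3 * (l1 * a 1 j - t j) + b 4 * (l0 * a 0 j - t j) + b 5 * (l6 * a 6 j - t j)) →
        ∃ b : Fin 6 → ℝ, (∀ k, 0 ≤ b k) ∧ ∀ j, a i j = ∑ k, b k *
          (![fun j => l2 * a 2 j - l1 * a 1 j + t j, fun j => l4 * a 4 j - l0 * a 0 j + t j, t,
    fun j => l1 * a 1 j - t j, fun j => l0 * a 0 j - t j, fun j => l6 * a 6 j - t j] :
            Fin 6 → Fin n → ℝ) k j := by
      intro i l b hl hb he
      refine ⟨fun k => l⁻¹ * b k, fun k => mul_nonneg (inv_pos.2 hl).le (hb k), fun j => ?_⟩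
      have : a i j = l⁻¹ * (l * a i j) := by field_simp
      rw [this, he j]
      simp only [Fin.sum_univ_six]
      simp
      ring
    intro i
    fin_cases i
    · refine fin 0 l0 ![0,0,1,0,1,0] pl0 (by intro k; fin_cases k <;> simp) (fun j => ?_)
      simp
    · refine fin 1 l1 ![0,0,1,1,0,0] pl1 (by intro k; fin_cases k <;> simp) (fun j => ?_)
      simp
    · refine fin 2 l2 ![1,0,0,1,0,0] pl2 (by intro k; fin_cases k <;> simp) (fun j => ?_)
      simp
    · refine fin 3 l3 ![1,0,0,0,1,0] pl3 (by intro k; fin_cases k <;> simp) (fun j => ?_)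
      simp; linarith [R1 j]
    · refine fin 4 l4 ![0,1,0,0,1,0] pl4 (by intro k; fin_cases k <;> simp) (fun j => ?_)
      simp
    · refine fin 5 l5 ![0,1,0,0,0,1] pl5 (by intro k; fin_cases k <;> simp) (fun j => ?_)
      simp; linarith [R2 j]
    · refine fin 6 l6 ![0,0,1,0,0,1] pl6 (by intro k; fin_cases k <;> simp) (fun j => ?_)
      simp

lemma Pos7_NR6 {n : ℕ} (W : Fin 3 → Fin n → ℝ) (p : Fin 7 → Fin 3 → ℝ) (h : Pos7 p)
    (a : Fin 7 → Fin n → ℝ) (ha : ∀ i j, a i j = ∑ k, p i k * W k j)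
    (hpos : ∀ i j, 0 ≤ a i j) : NR6 a := by
  obtain ⟨s, hR, hL⟩ := exists_good p h
  refine NR6_perm a (Equiv.addRight s) ?_
  refine good_NR6 W (fun i => p (i + s)) (Pos7_add p h s) _ (fun i j => ha _ j)
    (fun i j => hpos _ j) ?_ ?_
  · simpa only [Rt, add_zero] using hR
  · simpa only [Lt, add_zero] using hL

/-- A strict total order on `Fin 7` can be sorted. -/
lemma exists_sort (R : Fin 7 → Fin 7 → Prop) (hirr : ∀ i, ¬ R i i)
    (htri : ∀ i j, i ≠ j → R i j ∨ R j i) (htrans : ∀ i j k, R i j → R j k → R i k) :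
    ∃ σ : Equiv.Perm (Fin 7), ∀ i j, i < j → R (σ i) (σ j) := by
  classical
  let key : Fin 7 → ℕ := fun i => (Finset.univ.filter (fun j => R j i)).card
  have hkey : ∀ i j, R i j → key i < key j := by
    intro i j hij
    apply Finset.card_lt_card
    refine ⟨fun k hk => ?_, fun hs => ?_⟩
    · simp only [Finset.mem_filter, Finset.mem_univ, true_and] at hk ⊢
      exact htrans _ _ _ hk hij
    · have : i ∈ Finset.univ.filter (fun k => R k i) := hs (by simp [hij])
      simp only [Finset.mem_filter, Finset.mem_univ, true_and] at this
      exact hirr i this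
  refine ⟨Tuple.sort key, fun i j hij => ?_⟩
  have hm : key (Tuple.sort key i) ≤ key (Tuple.sort key j) := Tuple.monotone_sort key hij.le
  rcases htri (Tuple.sort key i) (Tuple.sort key j)
    (fun e => hij.ne ((Tuple.sort key).injective e)) with h | h
  · exact h
  · exact absurd (hkey _ _ h) (not_lt.2 hm)

lemma degenerate {n : ℕ} (a : Fin 7 → Fin n → ℝ) (hpos : ∀ i j, 0 ≤ a i j) (i : Fin 7)
    (w : Fin 7 → ℝ) (hw : ∀ k, 0 ≤ w k) (hwi : w i = 0)
    (he : ∀ j, a i j = ∑ k, w k * a k j) : NR6 a := by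
  refine ⟨fun k => a (i.succAbove k), fun k j => hpos _ j, fun i' => ?_⟩
  by_cases hi : i' = i
  · subst hi
    refine ⟨fun k => w (i'.succAbove k), fun k => hw _, fun j => ?_⟩
    rw [he j, Fin.sum_univ_succAbove _ i', hwi]
    simp
  · obtain ⟨k, rfl⟩ := Fin.exists_succAbove_eq hi
    refine ⟨Pi.single k 1, fun k' => ?_, fun j => ?_⟩
    · by_cases hk : k' = k
      · subst hk; simp
      · simp [hk]
    · simp [Pi.single_apply]

lemma three_cone {n : ℕ} (a : Fin 7 → Fin n → ℝ) (hpos : ∀ i j, 0 ≤ a i j)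
    (hN : ¬ NR6 a) (i j k l : Fin 7) (hj : j ≠ i) (hk : k ≠ i) (hl : l ≠ i) (c x y z : ℝ)
    (hc : 0 < c) (hx : 0 ≤ x) (hy : 0 ≤ y) (hz : 0 ≤ z)
    (he : ∀ m, c * a i m = x * a j m + y * a k m + z * a l m) : False := by
  apply hN
  refine degenerate a hpos i (fun q => c⁻¹ * ((if q = j then x else 0) + (if q = k then y else 0)
    + (if q = l then z else 0))) (fun q => ?_) ?_ (fun m => ?_)
  · have : 0 < c⁻¹ := inv_pos.2 hc
    apply mul_nonneg this.le
    apply add_nonneg (add_nonneg _ _) _ <;> split_ifs <;> simp [*]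
  · simp [hj.symm, hk.symm, hl.symm]
  · have e : a i m = c⁻¹ * (c * a i m) := by field_simp
    rw [e, he m]
    simp [mul_assoc, add_mul, mul_add, Finset.sum_add_distrib]

lemma main_NR6 {n : ℕ} (W : Fin 3 → Fin n → ℝ) (p : Fin 7 → Fin 3 → ℝ)
    (a : Fin 7 → Fin n → ℝ) (ha : ∀ i j, a i j = ∑ k, p i k * W k j)
    (hpos : ∀ i j, 0 ≤ a i j) : NR6 a := by
  by_contra hN
  have cone := three_cone a hpos hN
  have hs : ∀ i, 0 < ∑ j, a i j := by
    intro i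
    refine lt_of_le_of_ne (Finset.sum_nonneg fun j _ => hpos i j) (fun h => ?_)
    have := (Finset.sum_eq_zero_iff_of_nonneg (fun j _ => hpos i j)).1 h.symm
    obtain ⟨j, hj⟩ : ∃ j, j ≠ i := exists_ne i
    exact cone i j j j hj hj hj 1 0 0 0 one_pos le_rfl le_rfl le_rfl
      (fun m => by simp [this m (Finset.mem_univ m)])
  have cr : ∀ i j k l m, D3 (p j) (p k) (p l) * a i m - D3 (p i) (p k) (p l) * a j m
      + D3 (p i) (p j) (p l) * a k m - D3 (p i) (p j) (p k) * a l m = 0 := by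
    intro i j k l m
    rw [ha i, ha j, ha k, ha l]
    exact cramer4 W _ _ _ _ m
  have ne : ∀ i j k, i ≠ j → i ≠ k → j ≠ k → D3 (p i) (p j) (p k) ≠ 0 := by
    intro i j k hij hik hjk h0
    obtain ⟨v, hv0, hv⟩ : ∃ v : Fin 3 → ℝ, v ≠ 0 ∧
        Matrix.vecMul v (Matrix.of ![p i, p j, p k]) = 0 := by
      rw [Matrix.exists_vecMul_eq_zero_iff, Matrix.det_fin_three]
      simp only [D3] at h0
      simp
      linarith
    have hv' : ∀ q, v 0 * p i q + v 1 * p j q + v 2 * p k q = 0 := by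
      intro q
      have := congrFun hv q
      simpa [Matrix.vecMul, dotProduct, Fin.sum_univ_three] using this
    have hva : ∀ m, v 0 * a i m + v 1 * a j m + v 2 * a k m = 0 := by
      intro m
      simp only [ha, Fin.sum_univ_three]
      linear_combination W 0 m * hv' 0 + W 1 m * hv' 1 + W 2 m * hv' 2
    have hvs : v 0 * (∑ m, a i m) + v 1 * (∑ m, a j m) + v 2 * (∑ m, a k m) = 0 := by
      rw [Finset.mul_sum, Finset.mul_sum, Finset.mul_sum, ← Finset.sum_add_distrib,
        ← Finset.sum_add_distrib]
      exact Finset.sum_eq_zero fun m _ => hva m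
    have hnz : v 0 ≠ 0 ∨ v 1 ≠ 0 ∨ v 2 ≠ 0 := by
      by_contra hc
      push Not at hc
      apply hv0
      funext q
      fin_cases q
      · exact hc.1
      · exact hc.2.1
      · exact hc.2.2
    have si := hs i
    have sj := hs j
    have sk := hs k
    generalize v 0 = x at *
    generalize v 1 = y at *
    generalize v 2 = z at *
    have c1 : ∀ e : ℝ, 0 < e * x → e * y ≤ 0 → e * z ≤ 0 → False := fun e h1 h2 h3 =>
      cone i j k k hij.symm hik.symm hik.symm (e * x) (-(e * y)) (-(e * z)) 0 h1 (by linarith)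
        (by linarith) le_rfl (fun m => by linear_combination e * hva m)
    have c2 : ∀ e : ℝ, 0 < e * y → e * x ≤ 0 → e * z ≤ 0 → False := fun e h1 h2 h3 =>
      cone j i k k hij hjk.symm hjk.symm (e * y) (-(e * x)) (-(e * z)) 0 h1 (by linarith)
        (by linarith) le_rfl (fun m => by linear_combination e * hva m)
    have c3 : ∀ e : ℝ, 0 < e * z → e * x ≤ 0 → e * y ≤ 0 → False := fun e h1 h2 h3 =>
      cone k i j j hik hjk hjk (e * z) (-(e * x)) (-(e * y)) 0 h1 (by linarith)
        (by linarith) le_rfl (fun m => by linear_combination e * hva m)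
    have c1p := c1 1
    have c1n := c1 (-1)
    have c2p := c2 1
    have c2n := c2 (-1)
    have c3p := c3 1
    have c3n := c3 (-1)
    simp only [one_mul, neg_mul, neg_nonpos, Left.neg_pos_iff] at c1p c1n c2p c2n c3p c3n
    rcases lt_trichotomy x 0 with hx | hx | hx <;> rcases lt_trichotomy y 0 with hy | hy | hy <;>
      rcases lt_trichotomy z 0 with hz | hz | hz <;>
      first
        | exact c1p hx hy.le hz.le
        | exact c1n hx hy.le hz.le
        | exact c1p hx hy.le hz.ge
        | exact c1n hx hy.le hz.ge
        | exact c1p hx hy.ge hz.le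
        | exact c1n hx hy.ge hz.le
        | exact c2p hy hx.le hz.le
        | exact c2n hy hx.le hz.le
        | exact c2p hy hx.le hz.ge
        | exact c2n hy hx.ge hz.le
        | exact c3p hz hx.le hy.le
        | exact c3n hz hx.le hy.le
        | exact c3n hz hx.ge hy.le
        | exact c3n hz hx.le hy.ge
        | (subst hx hy hz; simp at hnz)
        | nlinarith [mul_pos si sj]
  -- the order around vertex `0`
  have hsort : ∃ σ : Equiv.Perm (Fin 7), ∀ i j, i < j →
      ((σ i = 0 ∧ σ j ≠ 0) ∨ (0 < D3 (p 0) (p (σ i)) (p (σ j)))) := by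
    refine exists_sort
      (fun i j => (i = 0 ∧ j ≠ 0) ∨ (0 < D3 (p 0) (p i) (p j))) ?_ ?_ ?_
    · rintro i (h | h)
      · exact h.2 h.1
      · have : D3 (p 0) (p i) (p i) = 0 := by simp only [D3]; ring
        rw [this] at h; exact lt_irrefl _ h
    · intro i j hij
      by_cases hi : i = 0
      · left; left; exact ⟨hi, fun hj => hij (hi.trans hj.symm)⟩
      by_cases hj : j = 0
      · right; left; exact ⟨hj, hi⟩
      have e : D3 (p 0) (p j) (p i) = - D3 (p 0) (p i) (p j) := by simp only [D3]; ring
      rcases lt_or_gt_of_ne (ne 0 i j (Ne.symm hi) (Ne.symm hj) hij) with h | h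
      · right; right; rw [e]; linarith
      · left; right; exact h
    · intro x y z h1 h2
      have dd : ∀ q, D3 (p 0) q (p 0) = 0 := fun q => by simp only [D3]; ring
      have hy : y ≠ 0 := by
        rintro rfl
        rcases h1 with h1 | h1
        · exact h1.2 rfl
        · rw [dd] at h1; exact lt_irrefl _ h1
      have hz : z ≠ 0 := by
        rintro rfl
        rcases h2 with h1 | h1
        · exact h1.2 rfl
        · rw [dd] at h1; exact lt_irrefl _ h1
      by_cases hx : x = 0
      · left; exact ⟨hx, hz⟩
      right
      have h1' : 0 < D3 (p 0) (p x) (p y) := h1.resolve_left (fun h => hx h.1)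
      have h2' : 0 < D3 (p 0) (p y) (p z) := h2.resolve_left (fun h => hy h.1)
      by_contra hneg
      push Not at hneg
      have rel : ∀ m, D3 (p x) (p y) (p z) * a 0 m = D3 (p 0) (p y) (p z) * a x m
          + (- D3 (p 0) (p x) (p z)) * a y m + D3 (p 0) (p x) (p y) * a z m := fun m => by
        linear_combination cr 0 x y z m
      have rels : D3 (p x) (p y) (p z) * (∑ m, a 0 m) = D3 (p 0) (p y) (p z) * (∑ m, a x m)
          + (- D3 (p 0) (p x) (p z)) * (∑ m, a y m) + D3 (p 0) (p x) (p y) * (∑ m, a z m) := by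
        simp only [Finset.mul_sum, ← Finset.sum_add_distrib]
        exact Finset.sum_congr rfl fun m _ => rel m
      have pos : 0 < D3 (p x) (p y) (p z) * (∑ m, a 0 m) := by
        rw [rels]
        have := mul_pos h2' (hs x)
        have := mul_pos h1' (hs z)
        have := mul_nonneg (neg_nonneg.2 hneg) (hs y).le
        linarith
      have pos' : 0 < D3 (p x) (p y) (p z) := (mul_pos_iff_of_pos_right (hs 0)).1 pos
      exact cone 0 x y z hx hy hz _ _ _ _ pos' h2'.le (by linarith) h1'.le rel
  obtain ⟨σ, hσ⟩ := hsort
  refine hN (NR6_perm a σ (Pos7_NR6 W (fun i => p (σ i)) ?_ _ (fun i j => ha _ j)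
    (fun i j => hpos _ j)))
  intro i j k hij hjk
  have h1 := hσ i j hij
  have h2 := hσ j k hjk
  have h3 := hσ i k (hij.trans hjk)
  have d1 : σ i ≠ σ j := fun e => hij.ne (σ.injective e)
  have d2 : σ j ≠ σ k := fun e => hjk.ne (σ.injective e)
  have d3 : σ i ≠ σ k := fun e => (hij.trans hjk).ne (σ.injective e)
  show 0 < D3 (p (σ i)) (p (σ j)) (p (σ k))
  generalize σ i = x at *
  generalize σ j = y at *
  generalize σ k = z at *
  have dd : ∀ q, D3 (p 0) q (p 0) = 0 := fun q => by simp only [D3]; ring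
  have hy : y ≠ 0 := by
    rintro rfl
    rcases h1 with h1 | h1
    · exact h1.2 rfl
    · rw [dd] at h1; exact lt_irrefl _ h1
  have h2' : 0 < D3 (p 0) (p y) (p z) := h2.resolve_left (fun h => hy h.1)
  by_cases hx : x = 0
  · subst hx; exact h2'
  have h1' : 0 < D3 (p 0) (p x) (p y) := h1.resolve_left (fun h => hx h.1)
  have h3' : 0 < D3 (p 0) (p x) (p z) := h3.resolve_left (fun h => hx h.1)
  by_contra hneg
  push Not at hneg
  refine cone y 0 x z hy.symm d1 d2.symm _ (- D3 (p x) (p y) (p z)) (D3 (p 0) (p y) (p z))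
    (D3 (p 0) (p x) (p y)) h3' (by linarith) h2'.le h1'.le (fun m => ?_)
  linear_combination cr 0 x y z m

lemma exists_factor {n : ℕ} (A : Matrix (Fin 7) (Fin n) ℝ) (hrank : A.rank = 3) :
    ∃ (p : Fin 7 → Fin 3 → ℝ) (W : Fin 3 → Fin n → ℝ), ∀ i j, A i j = ∑ k, p i k * W k j := by
  have h : Module.finrank ℝ (Submodule.span ℝ (Set.range A.row)) = 3 := by
    rw [← Matrix.rank_eq_finrank_span_row, hrank]
  let b := Module.finBasisOfFinrankEq ℝ _ h
  let v : Fin 7 → Submodule.span ℝ (Set.range A.row) :=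
    fun i => ⟨A.row i, Submodule.subset_span ⟨i, rfl⟩⟩
  refine ⟨fun i k => b.repr (v i) k, fun k j => (b k : Fin n → ℝ) j, fun i j => ?_⟩
  have := congrArg (fun x : Submodule.span ℝ (Set.range A.row) => (x : Fin n → ℝ) j)
    (b.sum_repr (v i))
  have e : A i j = ((v i : Submodule.span ℝ (Set.range A.row)) : Fin n → ℝ) j := rfl
  rw [e]
  refine this.symm.trans ?_
  simp only [Submodule.coe_sum, Submodule.coe_smul, Finset.sum_apply, Pi.smul_apply, smul_eq_mul]


/-- A rank-three nonnegative 7×n real matrix has nonnegative rank at most 6,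
witnessed by an explicit nonnegative factorization through 6. -/
theorem nonneg_rank_le_six_of_seven_rows (n : ℕ) (A : Matrix (Fin 7) (Fin n) ℝ)
    (hA : ∀ i j, 0 ≤ A i j) (hrank : A.rank = 3) :
    ∃ (B : Matrix (Fin 7) (Fin 6) ℝ) (C : Matrix (Fin 6) (Fin n) ℝ),
      (∀ i j, 0 ≤ B i j) ∧ (∀ i j, 0 ≤ C i j) ∧ A = B * C := by
  obtain ⟨p, W, hpW⟩ := exists_factor A hrank
  obtain ⟨C, hC, hB⟩ := main_NR6 W p A hpW hA
  choose B hB0 hB using hB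
  refine ⟨B, C, hB0, hC, ?_⟩
  apply Matrix.ext
  intro i j
  exact hB i j
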